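/- Let X ⊆ P² be a k-configuration of type (1,2,…,s) with s ≥ 2, and suppose there are exactly s lines in P² each containing exactly s points of X. Then there exist subsets X₁,…,X_s and lines L₁,…,L_s defining X as a k-configuration of type (1,2,…,s) such that L₁,…,L_s are precisely the s lines containing s points of X, and moreover, for each i = 1,…,s, the set X ∩ L_i consists of the s − 1 intersection points L_i ∩ L_j (j ≠ i) together with one point P_i that lies on no line L_j with j ≠ i. -/

import Mathlib

/-- The projective plane over a field `K`, as the projectivization of `K³`. -/
abbrev P2 (K : Type) [Field K] := Projectivization K (Fin 3 → K)

/-- A line in `P2 K`: a 2-dimensional linear subspace of `K³`. -/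
structure ProjLine (K : Type) [Field K] where
  toSubmodule : Submodule K (Fin 3 → K)
  finrank_eq_two : Module.finrank K toSubmodule = 2

/-- The set of points of `P2 K` lying on a line. -/
def ProjLine.points {K : Type} [Field K] (L : ProjLine K) : Set (P2 K) :=
  {p | p.submodule ≤ L.toSubmodule}

/-- The homogeneous prime ideal of a point of `P2 K`: the ideal generated by
the linear forms vanishing at the point. -/
noncomputable def pointIdeal {K : Type} [Field K] (p : P2 K) :
    Ideal (MvPolynomial (Fin 3) K) :=
  Ideal.span {f | f.IsHomogeneous 1 ∧ MvPolynomial.eval p.rep f = 0}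

/-- The defining ideal `I_{mX} = ⋂_{P ∈ X} I_P^m` of the fat point scheme `mX`. -/
noncomputable def fatIdeal {K : Type} [Field K] (X : Set (P2 K)) (m : ℕ) :
    Ideal (MvPolynomial (Fin 3) K) :=
  ⨅ p ∈ X, (pointIdeal p) ^ m

/-- The Hilbert function of `R/I`: `H(t) = dim_K R_t - dim_K I_t`. -/
noncomputable def hilb {K : Type} [Field K] (I : Ideal (MvPolynomial (Fin 3) K)) (t : ℕ) : ℕ :=
  Module.finrank K ↥(MvPolynomial.homogeneousSubmodule (Fin 3) K t) -
    Module.finrank K ↥(Submodule.restrictScalars K (I : Submodule (MvPolynomial (Fin 3) K) (MvPolynomial (Fin 3) K)) ⊓ MvPolynomial.homogeneousSubmodule (Fin 3) K t)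

/-- The Hilbert function extended to `ℤ`, with `H(t) = 0` for `t < 0`. -/
noncomputable def hilbZ {K : Type} [Field K] (I : Ideal (MvPolynomial (Fin 3) K)) (t : ℤ) : ℤ :=
  if t < 0 then 0 else hilb I t.toNat

/-- The first difference `ΔH(t) = H(t) - H(t-1)` of the Hilbert function. -/
noncomputable def deltaHilb {K : Type} [Field K] (I : Ideal (MvPolynomial (Fin 3) K)) (t : ℤ) : ℤ :=
  hilbZ I t - hilbZ I (t - 1)

/-- `X` is a k-configuration of type `(d 0, …, d (s-1))` defined using the subsets
`Xs 0, …, Xs (s-1)` and the (distinct) lines `Ls 0, …, Ls (s-1)`. -/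
structure IsKConfig {K : Type} [Field K] {s : ℕ} (X : Set (P2 K)) (d : Fin s → ℕ)
    (Xs : Fin s → Set (P2 K)) (Ls : Fin s → ProjLine K) : Prop where
  one_le : ∀ i, 1 ≤ d i
  strictMono : StrictMono d
  lines_distinct : Function.Injective Ls
  union_eq : X = ⋃ i, Xs i
  card_eq : ∀ i, (Xs i).ncard = d i
  subset_line : ∀ i, Xs i ⊆ (Ls i).points
  not_mem : ∀ i j : Fin s, j < i → ∀ p ∈ Xs j, p ∉ (Ls i).points

/-!
Any two lines meet in at most one point, so the `j`-th of the `s` lines carries at least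
`s - (j - 1)` points of `X` off the preceding ones. Together they cover at least
`s + (s - 1) + ⋯ + 1 = |X|` points, so none of these estimates loses anything, whatever the order
of the lines: any two of the lines meet in a point of `X` and no three are concurrent. Hence each
line carries `s - 1` crossings and one further point, and assigning every point of `X` to the last
line through it exhibits `X` as a k-configuration.
-/

open Finset

section Bonferroni

variable {α ι : Type*} [DecidableEq α] {A : ι → Finset α}

/-- The amount by which the union of the sets `A i`, `i ∈ t`, exceeds the size it would have if any
two of them met in exactly one point and no three had a point in common. It is integer-valued to
avoid truncated subtraction. -/
def bonferroniExcess (A : ι → Finset α) (t : Finset ι) : ℤ :=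
  #(t.biUnion A) + (#t).choose 2 - (∑ i ∈ t, #(A i) : ℕ)

theorem bonferroniExcess_empty : bonferroniExcess A ∅ = 0 := by
  simp [bonferroniExcess]

theorem bonferroniExcess_insert [DecidableEq ι] {i : ι} {t : Finset ι} (hi : i ∉ t) :
    bonferroniExcess A (insert i t) = bonferroniExcess A t + (#t - #(A i ∩ t.biUnion A)) := by
  have hcard := card_union_add_card_inter (A i) (t.biUnion A)
  have hchoose : (#t + 1).choose 2 = #t + (#t).choose 2 := by
    rw [Nat.choose_succ_succ', Nat.choose_one_right]
  simp only [bonferroniExcess, biUnion_insert, card_insert_of_notMem hi, sum_insert hi, hchoose]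
  push_cast
  linarith

theorem card_inter_biUnion_le (hA : Pairwise fun i j ↦ #(A i ∩ A j) ≤ 1) {i : ι} {t : Finset ι}
    (hi : i ∉ t) : #(A i ∩ t.biUnion A) ≤ #t := by
  rw [inter_biUnion]
  simpa only [mul_one] using
    card_biUnion_le_card_mul t _ 1 fun j hj ↦ hA (ne_of_mem_of_not_mem hj hi).symm

theorem monotone_bonferroniExcess (hA : Pairwise fun i j ↦ #(A i ∩ A j) ≤ 1) :
    Monotone (bonferroniExcess A) := by
  classical
  refine monotone_iff_forall_le_insert.2 fun t i hi ↦ ?_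
  have := card_inter_biUnion_le hA hi
  rw [bonferroniExcess_insert hi]
  lia

theorem bonferroniExcess_eq_zero [Fintype ι] (hA : Pairwise fun i j ↦ #(A i ∩ A j) ≤ 1)
    (hA₀ : bonferroniExcess A univ ≤ 0) (t : Finset ι) : bonferroniExcess A t = 0 :=
  le_antisymm ((monotone_bonferroniExcess hA t.subset_univ).trans hA₀)
    (bonferroniExcess_empty.symm.trans_le (monotone_bonferroniExcess hA t.empty_subset))

theorem card_inter_biUnion_eq [Fintype ι] (hA : Pairwise fun i j ↦ #(A i ∩ A j) ≤ 1)
    (hA₀ : bonferroniExcess A univ ≤ 0) {i : ι} {t : Finset ι} (hi : i ∉ t) :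
    #(A i ∩ t.biUnion A) = #t := by
  classical
  have hinsert := bonferroniExcess_insert (A := A) hi
  simp only [bonferroniExcess_eq_zero hA hA₀] at hinsert
  lia

end Bonferroni

section ExtremalArrangement

variable {α ι : Type*} {X : Set α} {ℓ : ι → Set α}

/-- A finite set `X` of points and a family `ℓ` of lines, any two of which meet in at most one
point, such that `X` is as small as the Bonferroni inequality for the traces `X ∩ ℓ i` permits. -/
structure IsExtremalArrangement [Fintype ι] (X : Set α) (ℓ : ι → Set α) : Prop where
  finite : X.Finite
  pairwise_subsingleton : Pairwise fun i j ↦ (ℓ i ∩ ℓ j).Subsingleton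
  ncard_add_choose_le : X.ncard + (Fintype.card ι).choose 2 ≤ ∑ i, (X ∩ ℓ i).ncard

/-- The points in which the line `ℓ i` meets the other lines of the family `ℓ`. -/
def crossings (ℓ : ι → Set α) (i : ι) : Set α :=
  {p | ∃ j, j ≠ i ∧ p ∈ ℓ i ∧ p ∈ ℓ j}

namespace IsExtremalArrangement

variable [Fintype ι]

/-- The trace of the line `ℓ i` on `X`, as a `Finset` so that the Bonferroni excess applies. -/
noncomputable def trace (h : IsExtremalArrangement X ℓ) (i : ι) : Finset α :=
  (h.finite.inter_of_left (ℓ i)).toFinset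

theorem coe_trace (h : IsExtremalArrangement X ℓ) (i : ι) : (h.trace i : Set α) = X ∩ ℓ i :=
  Set.Finite.coe_toFinset _

theorem card_trace (h : IsExtremalArrangement X ℓ) (i : ι) : #(h.trace i) = (X ∩ ℓ i).ncard := by
  rw [← h.coe_trace, Set.ncard_coe_finset]

theorem coe_biUnion_trace [DecidableEq α] (h : IsExtremalArrangement X ℓ) (t : Finset ι) :
    (t.biUnion h.trace : Set α) = X ∩ ⋃ j ∈ t, ℓ j := by
  simp only [coe_biUnion, coe_trace, Set.inter_iUnion₂, mem_coe]

theorem pairwise_card_trace_inter_le_one [DecidableEq α] (h : IsExtremalArrangement X ℓ) :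
    Pairwise fun i j ↦ #(h.trace i ∩ h.trace j) ≤ 1 := by
  intro i j hij
  rw [card_le_one_iff_subsingleton, coe_inter, coe_trace, coe_trace]
  exact (h.pairwise_subsingleton hij).anti
    (Set.inter_subset_inter Set.inter_subset_right Set.inter_subset_right)

theorem card_biUnion_trace_le [DecidableEq α] (h : IsExtremalArrangement X ℓ) (t : Finset ι) :
    #(t.biUnion h.trace) ≤ X.ncard := by
  rw [← Set.ncard_coe_finset, coe_biUnion_trace]
  exact Set.ncard_le_ncard Set.inter_subset_left h.finite

theorem bonferroniExcess_trace_univ_le [DecidableEq α] (h : IsExtremalArrangement X ℓ) :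
    bonferroniExcess h.trace univ ≤ 0 := by
  have hunion := h.card_biUnion_trace_le univ
  have hX := h.ncard_add_choose_le
  simp only [bonferroniExcess, card_trace, card_univ]
  lia

theorem ncard_inter_sdiff_add_card (h : IsExtremalArrangement X ℓ) {i : ι} {t : Finset ι}
    (hi : i ∉ t) : ((X ∩ ℓ i) \ ⋃ j ∈ t, ℓ j).ncard + #t = (X ∩ ℓ i).ncard := by
  classical
  have hinter : ((X ∩ ℓ i) ∩ ⋃ j ∈ t, ℓ j).ncard = #t := by
    rw [← card_inter_biUnion_eq h.pairwise_card_trace_inter_le_one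
      h.bonferroniExcess_trace_univ_le hi, ← Set.ncard_coe_finset, coe_inter, coe_trace,
      coe_biUnion_trace, ← Set.inter_inter_distrib_left, Set.inter_assoc]
  rw [← hinter, add_comm,
    Set.ncard_inter_add_ncard_sdiff_eq_ncard _ _ (h.finite.inter_of_left (ℓ i))]

theorem subset_iUnion (h : IsExtremalArrangement X ℓ) : X ⊆ ⋃ i, ℓ i := by
  classical
  have hexcess := bonferroniExcess_eq_zero h.pairwise_card_trace_inter_le_one
    h.bonferroniExcess_trace_univ_le univ
  have hX := h.ncard_add_choose_le
  have hle : X.ncard ≤ (X ∩ ⋃ i, ℓ i).ncard := by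
    have hunion : #(univ.biUnion h.trace) = (X ∩ ⋃ i, ℓ i).ncard := by
      rw [← Set.ncard_coe_finset, coe_biUnion_trace]
      simp only [mem_univ, Set.iUnion_true]
    simp only [bonferroniExcess, card_trace, card_univ, hunion] at hexcess
    lia
  exact Set.inter_eq_left.1 (Set.eq_of_subset_of_ncard_le Set.inter_subset_left hle h.finite)

theorem inter_subset (h : IsExtremalArrangement X ℓ) {i j : ι} (hij : i ≠ j) :
    ℓ i ∩ ℓ j ⊆ X := by
  have hcard := h.ncard_inter_sdiff_add_card (t := {j}) (by simpa only [mem_singleton] using hij)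
  simp only [mem_singleton, Set.iUnion_iUnion_eq_left, card_singleton] at hcard
  obtain ⟨q, ⟨hqX, hqi⟩, hqj⟩ : ((X ∩ ℓ i) ∩ ℓ j).Nonempty := by
    rw [← Set.not_disjoint_iff_nonempty_inter]
    intro hdisj
    rw [hdisj.sdiff_eq_left] at hcard
    lia
  intro p hp
  rwa [h.pairwise_subsingleton hij hp ⟨hqi, hqj⟩]

theorem crossings_subset (h : IsExtremalArrangement X ℓ) (i : ι) : crossings ℓ i ⊆ X ∩ ℓ i := by
  rintro p ⟨j, hji, hpi, hpj⟩
  exact ⟨h.inter_subset hji.symm ⟨hpi, hpj⟩, hpi⟩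

theorem ncard_crossings (h : IsExtremalArrangement X ℓ) (i : ι) :
    (crossings ℓ i).ncard = Fintype.card ι - 1 := by
  classical
  have hsdiff : (X ∩ ℓ i) \ ⋃ j ∈ univ.erase i, ℓ j = (X ∩ ℓ i) \ crossings ℓ i := by
    ext p
    simp only [crossings, Set.mem_sdiff, Set.mem_inter_iff, Set.mem_iUnion₂, mem_erase, mem_univ,
      Set.mem_ofPred_eq]
    grind
  have hcard := h.ncard_inter_sdiff_add_card (notMem_erase i univ)
  rw [hsdiff, card_erase_of_mem (mem_univ i), card_univ,
    ← Set.ncard_sdiff_add_ncard_of_subset (h.crossings_subset i)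
      (h.finite.inter_of_left (ℓ i))] at hcard
  exact (Nat.add_left_cancel hcard).symm

theorem exists_inter_eq_insert_crossings (h : IsExtremalArrangement X ℓ) {i : ι}
    (hi : (X ∩ ℓ i).ncard = Fintype.card ι) :
    ∃ P ∉ crossings ℓ i, X ∩ ℓ i = insert P (crossings ℓ i) := by
  have hsub := h.crossings_subset i
  have hfin := (h.finite.inter_of_left (ℓ i)).subset hsub
  have hpos : 0 < Fintype.card ι := Fintype.card_pos_iff.2 ⟨i⟩
  obtain ⟨P, hP, hins⟩ := (Set.exists_eq_insert_iff_ncard hfin).2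
    ⟨hsub, by rw [h.ncard_crossings, hi, Nat.sub_add_cancel hpos]⟩
  exact ⟨P, hP, hins.symm⟩

end IsExtremalArrangement

/-- The points of `X` for which `ℓ i` is the last line through them. -/
def lastPart [Preorder ι] (X : Set α) (ℓ : ι → Set α) (i : ι) : Set α :=
  {p ∈ X | IsGreatest {j | p ∈ ℓ j} i}

theorem iUnion_lastPart [LinearOrder ι] [Finite ι] (hX : X ⊆ ⋃ i, ℓ i) :
    ⋃ i, lastPart X ℓ i = X := by
  refine Set.Subset.antisymm (Set.iUnion_subset fun i p hp ↦ hp.1) fun p hp ↦ ?_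
  obtain ⟨i, hi⟩ : ∃ i, IsGreatest {j | p ∈ ℓ j} i :=
    Set.exists_max_image _ id (Set.toFinite _) (Set.mem_iUnion.1 (hX hp))
  exact Set.mem_iUnion.2 ⟨i, hp, hi⟩

theorem lastPart_eq_sdiff [LinearOrder ι] [LocallyFiniteOrderTop ι] (i : ι) :
    lastPart X ℓ i = (X ∩ ℓ i) \ ⋃ j ∈ Ioi i, ℓ j := by
  ext p
  simp only [lastPart, IsGreatest, mem_upperBounds, Set.mem_ofPred_eq, Set.mem_sdiff,
    Set.mem_inter_iff, Set.mem_iUnion₂, mem_Ioi, exists_prop, not_exists, not_and, and_assoc]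
  exact and_congr_right' (and_congr_right' (forall_congr' fun j ↦ by rw [← not_lt]; tauto))

theorem IsExtremalArrangement.ncard_lastPart_add_card_Ioi [LinearOrder ι] [Fintype ι]
    [LocallyFiniteOrderTop ι] (h : IsExtremalArrangement X ℓ) (i : ι) :
    (lastPart X ℓ i).ncard + #(Ioi i) = (X ∩ ℓ i).ncard := by
  rw [lastPart_eq_sdiff, h.ncard_inter_sdiff_add_card notMem_Ioi_self]

end ExtremalArrangement

theorem choose_two_succ_add_choose_two (n : ℕ) : (n + 1).choose 2 + n.choose 2 = n * n := by
  induction n with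
  | zero => rfl
  | succ n ih =>
    simp only [Nat.choose_succ_succ' _ 1, Nat.choose_one_right] at ih ⊢
    lia

theorem sum_fin_val_add_one (n : ℕ) : ∑ i : Fin n, (i.1 + 1) = (n + 1).choose 2 := by
  rw [Fin.sum_univ_eq_sum_range (· + 1), Nat.choose_two_right, ← sum_range_id, sum_range_succ']
  rfl

theorem exists_injective_fin_range_eq {α : Type*} {S : Set α} {n : ℕ} (hS : S.Finite)
    (hn : S.ncard = n) : ∃ f : Fin n → α, Function.Injective f ∧ S = Set.range f := by
  obtain ⟨m, f, hf, rfl⟩ := hS.fin_param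
  obtain rfl : m = n := by rw [← hn, Set.ncard_range_of_injective hf, Nat.card_fin]
  exact ⟨f, hf, rfl⟩

section Projective

variable {K : Type} [Field K]

theorem ProjLine.toSubmodule_injective :
    Function.Injective (ProjLine.toSubmodule : ProjLine K → Submodule K (Fin 3 → K)) := by
  rintro ⟨_, _⟩ ⟨_, _⟩ rfl
  rfl

theorem ProjLine.finrank_inf_le_one {L M : ProjLine K} (h : L ≠ M) :
    Module.finrank K ↥(L.toSubmodule ⊓ M.toSubmodule) ≤ 1 := by
  have hnot : ¬ L.toSubmodule ≤ M.toSubmodule := fun hle ↦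
    h (toSubmodule_injective (Submodule.eq_of_le_of_finrank_eq hle
      (L.finrank_eq_two.trans M.finrank_eq_two.symm)))
  have hlt := Submodule.finrank_lt_finrank_of_lt (inf_lt_left.2 hnot)
  rw [L.finrank_eq_two] at hlt
  exact Nat.le_of_lt_succ hlt

theorem ProjLine.subsingleton_inter_points {L M : ProjLine K} (h : L ≠ M) :
    (L.points ∩ M.points).Subsingleton := by
  have submodule_eq : ∀ p ∈ L.points ∩ M.points,
      p.submodule = L.toSubmodule ⊓ M.toSubmodule := fun p hp ↦
    Submodule.eq_of_le_of_finrank_le (le_inf hp.1 hp.2)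
      ((finrank_inf_le_one h).trans_eq p.finrank_submodule.symm)
  exact fun p hp q hq ↦
    Projectivization.submodule_injective ((submodule_eq p hp).trans (submodule_eq q hq).symm)

variable {s : ℕ} {X : Set (P2 K)}

theorem IsKConfig.finite {d : Fin s → ℕ} {Xs : Fin s → Set (P2 K)} {Ls : Fin s → ProjLine K}
    (h : IsKConfig X d Xs Ls) : X.Finite := by
  rw [h.union_eq]
  refine Set.finite_iUnion fun i ↦ Set.finite_of_ncard_pos ?_
  rw [h.card_eq]
  exact h.one_le i

theorem IsKConfig.ncard_le {d : Fin s → ℕ} {Xs : Fin s → Set (P2 K)} {Ls : Fin s → ProjLine K}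
    (h : IsKConfig X d Xs Ls) : X.ncard ≤ ∑ i, d i := by
  simp only [h.union_eq, ← h.card_eq]
  exact Set.ncard_iUnion_le_of_fintype Xs

variable {L : Fin s → ProjLine K}

theorem isExtremalArrangement_points (hX : X.Finite) (hXs : X.ncard ≤ (s + 1).choose 2)
    (hL : Function.Injective L) (hs : ∀ i, (X ∩ (L i).points).ncard = s) :
    IsExtremalArrangement X fun i ↦ (L i).points where
  finite := hX
  pairwise_subsingleton _ _ hij := ProjLine.subsingleton_inter_points (hL.ne hij)
  ncard_add_choose_le := by
    simp only [hs, sum_const, card_univ, Fintype.card_fin, smul_eq_mul,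
      ← choose_two_succ_add_choose_two]
    exact Nat.add_le_add_right hXs _

theorem IsExtremalArrangement.isKConfig_lastPart
    (h : IsExtremalArrangement X fun i ↦ (L i).points) (hL : Function.Injective L)
    (hs : ∀ i, (X ∩ (L i).points).ncard = s) :
    IsKConfig X (fun i ↦ i.1 + 1) (lastPart X fun i ↦ (L i).points) L where
  one_le i := Nat.le_add_left 1 i.1
  strictMono _ _ hij := Nat.succ_lt_succ hij
  lines_distinct := hL
  union_eq := (iUnion_lastPart h.subset_iUnion).symm
  card_eq i := by
    have hcard := h.ncard_lastPart_add_card_Ioi i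
    rw [hs, Fin.card_Ioi] at hcard
    lia
  subset_line _ _ hp := hp.2.1
  not_mem _ _ hji _ hp hpi := (hp.2.2 hpi).not_gt hji

theorem kconfig_s_lines_general (hX : X.Finite) (hXs : X.ncard ≤ (s + 1).choose 2)
    (hL : Function.Injective L) (hs : ∀ i, (X ∩ (L i).points).ncard = s) :
    ∃ Xs : Fin s → Set (P2 K), IsKConfig X (fun i ↦ i.1 + 1) Xs L ∧
      ∀ i : Fin s, ∃ P : P2 K,
        P ∈ X ∩ (L i).points ∧
        (∀ j : Fin s, j ≠ i → P ∉ (L j).points) ∧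
        X ∩ (L i).points =
          insert P {p : P2 K | ∃ j : Fin s, j ≠ i ∧ p ∈ (L i).points ∧ p ∈ (L j).points} ∧
        {p : P2 K | ∃ j : Fin s, j ≠ i ∧ p ∈ (L i).points ∧ p ∈ (L j).points}.ncard = s - 1 := by
  have h := isExtremalArrangement_points hX hXs hL hs
  refine ⟨_, h.isKConfig_lastPart hL hs, fun i ↦ ?_⟩
  obtain ⟨P, hP, hinsert⟩ :=
    h.exists_inter_eq_insert_crossings ((hs i).trans (Fintype.card_fin s).symm)
  have hPi : P ∈ X ∩ (L i).points := hinsert ▸ Set.mem_insert P _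
  exact ⟨P, hPi, fun j hji hPj ↦ hP ⟨j, hji, hPi.2, hPj⟩, hinsert,
    (h.ncard_crossings i).trans (by rw [Fintype.card_fin])⟩

end Projective

/-- **Lemma (case of exactly `s` lines).** Let `X` be a k-configuration of type
`(1,2,…,s)`, `s ≥ 2`, with exactly `s` lines each containing exactly `s` points
of `X`. Then `X` can be defined using lines `L₁,…,L_s` which are precisely those
`s` lines, and for each `i` the set `X ∩ L_i` consists of the `s − 1`
intersection points `L_i ∩ L_j` (`j ≠ i`) together with one point `P_i` lying
on no other line `L_j`. -/
theorem kconfig_s_lines {K : Type} [Field K] [IsAlgClosed K] {s : ℕ} (hs : 2 ≤ s)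
    (X : Set (P2 K)) (Xs : Fin s → Set (P2 K)) (Ls : Fin s → ProjLine K)
    (hX : IsKConfig X (fun i : Fin s => i.1 + 1) Xs Ls)
    (hfin : {L : ProjLine K | (X ∩ L.points).ncard = s}.Finite)
    (hcard : {L : ProjLine K | (X ∩ L.points).ncard = s}.ncard = s) :
    ∃ (Xs' : Fin s → Set (P2 K)) (Ls' : Fin s → ProjLine K),
      IsKConfig X (fun i : Fin s => i.1 + 1) Xs' Ls' ∧
      {L : ProjLine K | (X ∩ L.points).ncard = s} = Set.range Ls' ∧
      ∀ i : Fin s, ∃ P : P2 K,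
        P ∈ X ∩ (Ls' i).points ∧
        (∀ j : Fin s, j ≠ i → P ∉ (Ls' j).points) ∧
        X ∩ (Ls' i).points =
          insert P {p : P2 K | ∃ j : Fin s, j ≠ i ∧ p ∈ (Ls' i).points ∧ p ∈ (Ls' j).points} ∧
        {p : P2 K | ∃ j : Fin s, j ≠ i ∧ p ∈ (Ls' i).points ∧ p ∈ (Ls' j).points}.ncard
          = s - 1 := by
  obtain ⟨L, hL, hrange⟩ := exists_injective_fin_range_eq hfin hcard
  obtain ⟨Y, hY, hpoints⟩ := kconfig_s_lines_general hX.finite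
    (hX.ncard_le.trans_eq (sum_fin_val_add_one s)) hL fun i ↦ hrange.ge ⟨i, rfl⟩
  exact ⟨Y, L, hY, hrange, hpoints⟩
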